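/- Let D be a positive natural number, α, σ : ℝ → ℝ smooth with α(t) > 0 and σ(t) > 0 for all t, λ(t) = log(α(t)²/σ(t)²), f(t) = (d/dt) log α(t), g(t)² = -λ'(t)·σ(t)². Let p : ℝ → ℝ^D → ℝ be smooth and everywhere positive, satisfying the linear-drift Fokker–Planck equation ∂_t p(t,x) = -div_x(f(t)·x·p(t,x)) + (1/2)·g(t)²·Δ_x p(t,x) for all t and x. If y : ℝ → ℝ^D is a differentiable curve satisfying the high-probability ODE y'(s) = f(s)·y(s) - g(s)²·∇_x log p(s, y(s)) for all s, then for all s: (d/ds) log p(s, y(s)) = -D·f(s) + (1/2)·g(s)²·Δ_x log p(s, y(s)) - (1/2)·g(s)²·‖∇_x log p(s, y(s))‖². -/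

import Mathlib

open scoped BigOperators RealInnerProductSpace
open MeasureTheory

/-- Divergence of a vector field on `EuclideanSpace ℝ (Fin D)`. -/
noncomputable def divg {D : ℕ} (F : EuclideanSpace ℝ (Fin D) → EuclideanSpace ℝ (Fin D))
    (x : EuclideanSpace ℝ (Fin D)) : ℝ :=
  ∑ i, fderiv ℝ F x (EuclideanSpace.single i 1) i

/-- Laplacian of a scalar field on `EuclideanSpace ℝ (Fin D)`. -/
noncomputable def lap {D : ℕ} (f : EuclideanSpace ℝ (Fin D) → ℝ)
    (x : EuclideanSpace ℝ (Fin D)) : ℝ :=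
  divg (gradient f) x

/-!
Dividing the Fokker–Planck equation by the density turns it into an equation for `log p`, with
`∇ p / p = ∇ log p` and `Δ p / p = Δ log p + ‖∇ log p‖²`:
`∂ₜ log p = -div b - ⟪∇ log p, b⟫ + (g² / 2) (Δ log p + ‖∇ log p‖²)`.
The derivative of `log p` along a curve with velocity `b - g² ∇ log p` is `∂ₜ log p` plus
`⟪∇ log p, b - g² ∇ log p⟫`: the transport terms cancel, and the coefficient of `‖∇ log p‖²`
becomes `g² / 2 - g² = -g² / 2`.
-/

section Calculus

open scoped Gradient

theorem hasDerivAt_along_curve {𝕜 E F : Type*} [NontriviallyNormedField 𝕜]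
    [NormedAddCommGroup E] [NormedSpace 𝕜 E] [NormedAddCommGroup F] [NormedSpace 𝕜 F]
    {f : 𝕜 → E → F} {y : 𝕜 → E} {v : E} {s : 𝕜}
    (hf : DifferentiableAt 𝕜 (fun q : 𝕜 × E => f q.1 q.2) (s, y s)) (hy : HasDerivAt y v s) :
    HasDerivAt (fun u => f u (y u))
      (deriv (fun u => f u (y s)) s + fderiv 𝕜 (f s) (y s) v) s := by
  set L := fderiv 𝕜 (fun q : 𝕜 × E => f q.1 q.2) (s, y s)
  have hL : HasFDerivAt (fun q : 𝕜 × E => f q.1 q.2) L (s, y s) := hf.hasFDerivAt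
  have htotal : HasDerivAt (fun u => f u (y u)) (L (1, v)) s :=
    hL.comp_hasDerivAt (f := fun u => (u, y u)) s ((hasDerivAt_id s).prodMk hy)
  have htime : HasDerivAt (fun u => f u (y s)) (L (1, 0)) s :=
    hL.comp_hasDerivAt (f := fun u => (u, y s)) s
      ((hasDerivAt_id s).prodMk (hasDerivAt_const s (y s)))
  have hspace : HasFDerivAt (f s) (L.comp (.inr 𝕜 𝕜 E)) (y s) :=
    hL.comp (f := fun z => (s, z)) (y s) (hasFDerivAt_prodMk_right s (y s))
  have hsplit : L (1, v) = L (1, 0) + L (0, v) := by simp [← map_add]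
  simpa [htime.deriv, hspace.fderiv, hsplit] using htotal

variable {H : Type*} [NormedAddCommGroup H] [InnerProductSpace ℝ H] [CompleteSpace H]
  {u : H → ℝ} {x : H}

theorem contDiffAt_gradient {n : WithTop ℕ∞} (hu : ContDiffAt ℝ (n + 1) u x) :
    ContDiffAt ℝ n (∇ u) x :=
  (InnerProductSpace.toDual ℝ H).symm.toContinuousLinearEquiv.contDiff.contDiffAt.comp x
    hu.fderiv_right_succ

theorem gradient_log (hu : DifferentiableAt ℝ u x) (hx : u x ≠ 0) :
    ∇ (fun z => Real.log (u z)) x = (u x)⁻¹ • ∇ u x := by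
  simp only [gradient, fderiv.log hu hx, map_smul]

theorem gradient_eq_smul_gradient_log (hu : DifferentiableAt ℝ u x) (hx : u x ≠ 0) :
    ∇ u x = u x • ∇ (fun z => Real.log (u z)) x := by
  rw [gradient_log hu hx, smul_inv_smul₀ hx]

end Calculus

section Divergence

open scoped Gradient Topology

variable {D : ℕ} {u : EuclideanSpace ℝ (Fin D) → ℝ}
  {F G : EuclideanSpace ℝ (Fin D) → EuclideanSpace ℝ (Fin D)} {x : EuclideanSpace ℝ (Fin D)}

theorem divg_congr_of_eventuallyEq (h : F =ᶠ[𝓝 x] G) : divg F x = divg G x := by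
  simp only [divg, h.fderiv_eq]

theorem divg_const_smul_id (c : ℝ) : divg (fun z => c • z) x = D * c := by
  have hfderiv : fderiv ℝ (fun z : EuclideanSpace ℝ (Fin D) => c • z) x = c • .id ℝ _ :=
    ((hasFDerivAt_id x).const_smul c).fderiv
  simp [divg, hfderiv]

theorem divg_smul (hu : DifferentiableAt ℝ u x) (hF : DifferentiableAt ℝ F x) :
    divg (fun z => u z • F z) x = u x * divg F x + ⟪∇ u x, F x⟫ := by
  have hfderiv : fderiv ℝ (fun z => u z • F z) x
      = u x • fderiv ℝ F x + (fderiv ℝ u x).smulRight (F x) :=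
    (hu.hasFDerivAt.smul hF.hasFDerivAt).fderiv
  have hinner : ⟪∇ u x, F x⟫ = ∑ i, fderiv ℝ u x (EuclideanSpace.single i 1) * F x i := by
    simp [← inner_gradient_left, PiLp.inner_apply, mul_comm]
  simp [divg, hfderiv, hinner, Finset.mul_sum, Finset.sum_add_distrib]

theorem divg_smul_eq_mul_log (hu : DifferentiableAt ℝ u x) (hx : u x ≠ 0)
    (hF : DifferentiableAt ℝ F x) :
    divg (fun z => u z • F z) x
      = u x * (divg F x + ⟪∇ (fun z => Real.log (u z)) x, F x⟫) := by
  rw [divg_smul hu hF, gradient_eq_smul_gradient_log hu hx, real_inner_smul_left, mul_add]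

theorem lap_eq_mul_lap_log (hu : ContDiffAt ℝ 2 u x) (hx : u x ≠ 0) :
    lap u x = u x * (lap (fun z => Real.log (u z)) x
      + ‖∇ (fun z => Real.log (u z)) x‖ ^ 2) := by
  have hgrad : ∇ u =ᶠ[𝓝 x] fun z => u z • ∇ (fun z => Real.log (u z)) z := by
    filter_upwards [hu.eventually (by simp), hu.continuousAt.eventually_ne hx] with z hz hz₀
    exact gradient_eq_smul_gradient_log (hz.differentiableAt two_ne_zero) hz₀
  have hlog : DifferentiableAt ℝ (∇ fun z => Real.log (u z)) x :=
    (contDiffAt_gradient (n := 1) (by simpa [one_add_one_eq_two] using hu.log hx)).differentiableAt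
      one_ne_zero
  rw [lap, divg_congr_of_eventuallyEq hgrad,
    divg_smul_eq_mul_log (hu.differentiableAt two_ne_zero) hx hlog, real_inner_self_eq_norm_sq, lap]

end Divergence

section FokkerPlanck

open scoped Gradient

variable {D : ℕ} {b : EuclideanSpace ℝ (Fin D) → EuclideanSpace ℝ (Fin D)} {gsq : ℝ}
  {p : ℝ → EuclideanSpace ℝ (Fin D) → ℝ}

/-- The Fokker–Planck equation at the space-time point `(t, x)` for the density `p` of a diffusion.
Being pointwise in time, it only refers to the values at time `t` of the drift field, `b`, and of
the squared diffusion coefficient, `gsq`. -/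
def FokkerPlanckAt (b : EuclideanSpace ℝ (Fin D) → EuclideanSpace ℝ (Fin D)) (gsq : ℝ)
    (p : ℝ → EuclideanSpace ℝ (Fin D) → ℝ) (t : ℝ) (x : EuclideanSpace ℝ (Fin D)) : Prop :=
  deriv (fun τ => p τ x) t = -divg (fun z => p t z • b z) x + (1 / 2) * gsq * lap (p t) x

theorem FokkerPlanckAt.deriv_log {t : ℝ} {x : EuclideanSpace ℝ (Fin D)}
    (h : FokkerPlanckAt b gsq p t x) (hb : DifferentiableAt ℝ b x)
    (hpt : DifferentiableAt ℝ (fun τ => p τ x) t) (hpx : ContDiffAt ℝ 2 (p t) x)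
    (hp₀ : p t x ≠ 0) :
    deriv (fun τ => Real.log (p τ x)) t
      = -divg b x - ⟪∇ (fun z => Real.log (p t z)) x, b x⟫
        + (1 / 2) * gsq * (lap (fun z => Real.log (p t z)) x
          + ‖∇ (fun z => Real.log (p t z)) x‖ ^ 2) := by
  rw [deriv.log hpt hp₀, h, divg_smul_eq_mul_log (hpx.differentiableAt two_ne_zero) hp₀ hb,
    lap_eq_mul_lap_log hpx hp₀]
  field_simp
  ring

theorem hp_ode_log_density_evolution_general {y : ℝ → EuclideanSpace ℝ (Fin D)} {s : ℝ}
    (hFP : FokkerPlanckAt b gsq p s (y s)) (hb : DifferentiableAt ℝ b (y s))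
    (hp : DifferentiableAt ℝ (fun q : ℝ × EuclideanSpace ℝ (Fin D) => p q.1 q.2) (s, y s))
    (hps : ContDiffAt ℝ 2 (p s) (y s)) (hpos : 0 < p s (y s))
    (hy : HasDerivAt y (b (y s) - gsq • ∇ (fun z => Real.log (p s z)) (y s)) s) :
    HasDerivAt (fun u => Real.log (p u (y u)))
      (-divg b (y s) + (1 / 2) * gsq * lap (fun z => Real.log (p s z)) (y s)
        - (1 / 2) * gsq * ‖∇ (fun z => Real.log (p s z)) (y s)‖ ^ 2) s := by
  have hpt : DifferentiableAt ℝ (fun τ => p τ (y s)) s :=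
    hp.comp (f := fun τ => (τ, y s)) s (by fun_prop)
  have hcurve :=
    hasDerivAt_along_curve (f := fun t z => Real.log (p t z)) (hp.log hpos.ne') hy
  refine hcurve.congr_deriv ?_
  rw [hFP.deriv_log hb hpt hps hpos.ne', ← inner_gradient_left, inner_sub_right,
    real_inner_smul_right, real_inner_self_eq_norm_sq]
  ring

end FokkerPlanck

/-- Density evolution along the high-probability ODE (eq. mode-ode-logp). -/
theorem hp_ode_log_density_evolution {D : ℕ} (hD : 0 < D)
    (α σ : ℝ → ℝ) (hα : ContDiff ℝ (⊤ : ℕ∞) α) (hσ : ContDiff ℝ (⊤ : ℕ∞) σ)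
    (hαpos : ∀ t, 0 < α t) (hσpos : ∀ t, 0 < σ t)
    (lam f gsq : ℝ → ℝ)
    (hlam : ∀ t, lam t = Real.log (α t ^ 2 / σ t ^ 2))
    (hf : ∀ t, f t = deriv (fun u => Real.log (α u)) t)
    (hgsq : ∀ t, gsq t = -(deriv lam t) * σ t ^ 2)
    (p : ℝ → EuclideanSpace ℝ (Fin D) → ℝ)
    (hp : ContDiff ℝ (⊤ : ℕ∞) (fun q : ℝ × EuclideanSpace ℝ (Fin D) => p q.1 q.2))
    (hppos : ∀ t x, 0 < p t x)
    (hFP : ∀ t x, deriv (fun τ => p τ x) t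
      = - divg (fun y => p t y • (f t • y)) x + (1 / 2) * gsq t * lap (p t) x)
    (y : ℝ → EuclideanSpace ℝ (Fin D))
    (hy : ∀ s, HasDerivAt y
      (f s • y s - gsq s • gradient (fun z => Real.log (p s z)) (y s)) s) :
    ∀ s, deriv (fun u => Real.log (p u (y u))) s
      = -(D : ℝ) * f s + (1 / 2) * gsq s * lap (fun z => Real.log (p s z)) (y s)
        - (1 / 2) * gsq s * ‖gradient (fun z => Real.log (p s z)) (y s)‖ ^ 2 := by
  intro s
  have hps : ContDiffAt ℝ 2 (p s) (y s) :=
    ((contDiff_infty.1 hp 2).comp (contDiff_prodMk_right s)).contDiffAt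
  simpa [divg_const_smul_id] using (hp_ode_log_density_evolution_general
    (b := fun z => f s • z) (hFP s (y s)) (by fun_prop) (hp.differentiable (by simp) _) hps
    (hppos s (y s)) (hy s)).deriv
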